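/- arXiv:2104.03482 — 3 statements merged into one kernel-verified Lean document; each statement's English description precedes it below -/
import Mathlib

section
/- Let G be a finite simple connected graph. Then (i) for every vertex v ∈ V(G), 2·e(v|G) ≤ e(v|S(G)) ≤ 2·e(v|G) + 1, and (ii) for every edge e ∈ E(G) (viewed as the corresponding subdivision vertex of S(G) and as a vertex of L(G)), 2·e(e|L(G)) ≤ e(e|S(G)) ≤ 2·e(e|L(G)) + 1. -/
/-!
The subdivision graph `S(G)` is bipartite, with colour classes `V(G)` and `E(G)`. Joining two
distinct vertices of one colour class whenever they have a common neighbour in `S(G)` yields `G`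
on the class `V(G)`, and `L(G)` on the class `E(G)`. Both parts of the theorem are therefore
instances of one fact about a bipartite graph `S` and such a half `H` of it.

A walk in `H` becomes a walk in `S` of exactly twice the length, by inserting common neighbours
(`IsHalf.exists_walk_double`), and a walk in `S` between vertices of the class shortens to a walk
in `H` of at most half the length (`IsHalf.exists_walk_half`). Hence distances inside the class
double, which gives the lower bound on the eccentricity; a vertex of the other class is adjacent
to one of this class, so it is at most one step further away, which gives the upper bound.
-/

/-!
Definitions for the leap eccentric connectivity index of graph operations with
subdivided edges (Song–Tang).
-/

open SimpleGraph Finset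
open scoped Classical

noncomputable section

instance edgeSetFintypeOfFintype {V : Type*} [Fintype V] (G : SimpleGraph V) :
    Fintype G.edgeSet :=
  Set.Finite.fintype (Set.toFinite _)

/-- Eccentricity `e(v|X)` of a vertex: the maximum distance from `v` to a vertex of `X`. -/
def ecc {V : Type*} [Fintype V] (X : SimpleGraph V) (v : V) : ℕ :=
  Finset.univ.sup (fun u => X.dist v u)

/-- `d₁(v|X)`: the degree of `v`. -/
def deg1 {V : Type*} [Fintype V] (X : SimpleGraph V) (v : V) : ℕ :=
  (Finset.univ.filter (fun u => X.Adj v u)).card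

/-- `d₂(v|X)`: the second degree of `v`, the number of vertices at distance exactly 2. -/
def deg2 {V : Type*} [Fintype V] (X : SimpleGraph V) (v : V) : ℕ :=
  (Finset.univ.filter (fun u => X.dist v u = 2)).card

/-- The leap eccentric connectivity index `Lξᶜ(X) = Σ_v d₂(v|X)·e(v|X)`. -/
def leapECI {V : Type*} [Fintype V] (X : SimpleGraph V) : ℕ :=
  ∑ v, deg2 X v * ecc X v

/-- The eccentric connectivity index `ξᶜ(X) = Σ_v d₁(v|X)·e(v|X)`. -/
def eci {V : Type*} [Fintype V] (X : SimpleGraph V) : ℕ :=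
  ∑ v, deg1 X v * ecc X v

/-- The first Zagreb index `M₁(X) = Σ_v d₁(v|X)²`. -/
def zagrebM1 {V : Type*} [Fintype V] (X : SimpleGraph V) : ℕ :=
  ∑ v, (deg1 X v) ^ 2

/-- The total eccentricity `θ(X) = Σ_v e(v|X)`. -/
def totalEcc {V : Type*} [Fintype V] (X : SimpleGraph V) : ℕ :=
  ∑ v, ecc X v

/-- The number of edges `|E(X)|`. -/
def numEdges {V : Type*} (X : SimpleGraph V) : ℕ := X.edgeSet.ncard

/-- The line graph `L(G)`, with vertex set `E(G)`: two edges of `G` are adjacent in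
`L(G)` iff they are distinct and share an endpoint. -/
def lineG {V : Type*} (G : SimpleGraph V) : SimpleGraph G.edgeSet :=
  SimpleGraph.fromRel (fun e f => ∃ v, v ∈ (e : Sym2 V) ∧ v ∈ (f : Sym2 V))

/-- The subdivision graph `S(G)`, with vertex set `V(G) ⊕ E(G)`:
`v ∈ V(G)` is adjacent to `e ∈ E(G)` iff `v` is an endpoint of `e`; no other edges. -/
def subdivG {V : Type*} (G : SimpleGraph V) : SimpleGraph (V ⊕ G.edgeSet) :=
  SimpleGraph.fromRel (fun a b => match a, b with
    | Sum.inl v, Sum.inr e => v ∈ (e : Sym2 V)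
    | _, _ => False)

/-- The graph `Q(G)`, with vertex set `V(G) ⊕ E(G)`: `v ∈ V(G)` is adjacent to
`e ∈ E(G)` iff `v` is an endpoint of `e`, and distinct `e, e' ∈ E(G)` are adjacent
iff the corresponding edges share an endpoint in `G`. -/
def qGraph {V : Type*} (G : SimpleGraph V) : SimpleGraph (V ⊕ G.edgeSet) :=
  SimpleGraph.fromRel (fun a b => match a, b with
    | Sum.inl v, Sum.inr e => v ∈ (e : Sym2 V)
    | Sum.inr e, Sum.inr f => ∃ v, v ∈ (e : Sym2 V) ∧ v ∈ (f : Sym2 V)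
    | _, _ => False)

/-- The graph `R(G)`, with vertex set `V(G) ⊕ E(G)`: `v, v' ∈ V(G)` are adjacent iff
they are adjacent in `G`, and `v ∈ V(G)` is adjacent to `e ∈ E(G)` iff `v` is an
endpoint of `e`. -/
def rGraph {V : Type*} (G : SimpleGraph V) : SimpleGraph (V ⊕ G.edgeSet) :=
  SimpleGraph.fromRel (fun a b => match a, b with
    | Sum.inl v, Sum.inl w => G.Adj v w
    | Sum.inl v, Sum.inr e => v ∈ (e : Sym2 V)
    | _, _ => False)

/-- The total graph `T(G)`, with vertex set `V(G) ⊕ E(G)`: adjacency holds iff the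
corresponding elements of `G` are adjacent or incident. -/
def tGraph {V : Type*} (G : SimpleGraph V) : SimpleGraph (V ⊕ G.edgeSet) :=
  SimpleGraph.fromRel (fun a b => match a, b with
    | Sum.inl v, Sum.inl w => G.Adj v w
    | Sum.inl v, Sum.inr e => v ∈ (e : Sym2 V)
    | Sum.inr e, Sum.inr f => ∃ v, v ∈ (e : Sym2 V) ∧ v ∈ (f : Sym2 V)
    | _, _ => False)

/-- `G` is `F`-free: no induced subgraph of `G` is isomorphic to `F`. -/
def fFree {W V : Type*} (F : SimpleGraph W) (G : SimpleGraph V) : Prop :=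
  ∀ s : Set V, IsEmpty (F ≃g G.induce s)

/-- The subdivision vertex join `G ∨̇ H`: the disjoint union of `S(G)` and `H`,
joining every original vertex of `G` to every vertex of `H`. -/
def svJoin {V W : Type*} (G : SimpleGraph V) (H : SimpleGraph W) :
    SimpleGraph ((V ⊕ G.edgeSet) ⊕ W) :=
  SimpleGraph.fromRel (fun a b => match a, b with
    | Sum.inl x, Sum.inl y => (subdivG G).Adj x y
    | Sum.inl (Sum.inl _), Sum.inr _ => True
    | Sum.inr w, Sum.inr w' => H.Adj w w'
    | _, _ => False)

/-- The subdivision edge join `G ⊻ H`: the disjoint union of `S(G)` and `H`,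
joining every subdivision vertex to every vertex of `H`. -/
def seJoin {V W : Type*} (G : SimpleGraph V) (H : SimpleGraph W) :
    SimpleGraph ((V ⊕ G.edgeSet) ⊕ W) :=
  SimpleGraph.fromRel (fun a b => match a, b with
    | Sum.inl x, Sum.inl y => (subdivG G).Adj x y
    | Sum.inl (Sum.inr _), Sum.inr _ => True
    | Sum.inr w, Sum.inr w' => H.Adj w w'
    | _, _ => False)

/-- The subdivision vertex edge join `G^S △ (H₁^V ∨ H₂^S)`: the disjoint union of
`S(G)`, `H₁` and `H₂`, joining every original vertex of `G` to every vertex of `H₁`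
and every subdivision vertex to every vertex of `H₂`. -/
def sveJoin {V W₁ W₂ : Type*} (G : SimpleGraph V) (H₁ : SimpleGraph W₁)
    (H₂ : SimpleGraph W₂) : SimpleGraph ((V ⊕ G.edgeSet) ⊕ (W₁ ⊕ W₂)) :=
  SimpleGraph.fromRel (fun a b => match a, b with
    | Sum.inl x, Sum.inl y => (subdivG G).Adj x y
    | Sum.inl (Sum.inl _), Sum.inr (Sum.inl _) => True
    | Sum.inl (Sum.inr _), Sum.inr (Sum.inr _) => True
    | Sum.inr (Sum.inl w), Sum.inr (Sum.inl w') => H₁.Adj w w'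
    | Sum.inr (Sum.inr w), Sum.inr (Sum.inr w') => H₂.Adj w w'
    | _, _ => False)

/-- The double corona of a base graph `B` on `A ⊕ E'` with the graphs `H₁, H₂`:
one copy of `H₁` for each `A`-vertex, joined to it, and one copy of `H₂` for each
`E'`-vertex, joined to it. -/
def doubleCorona {A E' W₁ W₂ : Type*} (B : SimpleGraph (A ⊕ E')) (H₁ : SimpleGraph W₁)
    (H₂ : SimpleGraph W₂) : SimpleGraph ((A ⊕ E') ⊕ (A × W₁ ⊕ E' × W₂)) :=
  SimpleGraph.fromRel (fun a b => match a, b with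
    | Sum.inl x, Sum.inl y => B.Adj x y
    | Sum.inl (Sum.inl v), Sum.inr (Sum.inl p) => v = p.1
    | Sum.inl (Sum.inr e), Sum.inr (Sum.inr p) => e = p.1
    | Sum.inr (Sum.inl p), Sum.inr (Sum.inl q) => p.1 = q.1 ∧ H₁.Adj p.2 q.2
    | Sum.inr (Sum.inr p), Sum.inr (Sum.inr q) => p.1 = q.1 ∧ H₂.Adj p.2 q.2
    | _, _ => False)

/-- `H` is the half of the bipartite graph `S` on the colour class `Set.range i`: the vertices of
`H` are those of the class, and distinct ones are adjacent when they have a common neighbour in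
`S`. Vertices of the other class are required not to be isolated. -/
structure IsHalf {A T : Type*} (H : SimpleGraph A) (S : SimpleGraph T) (i : A → T) : Prop where
  inj : Function.Injective i
  adj_iff : ∀ a b, H.Adj a b ↔ a ≠ b ∧ ∃ t, S.Adj (i a) t ∧ S.Adj t (i b)
  notMem_range : ∀ a t, S.Adj (i a) t → t ∉ Set.range i
  mem_range : ∀ s t, s ∉ Set.range i → S.Adj s t → t ∈ Set.range i
  exists_adj : ∀ t, t ∉ Set.range i → ∃ a, S.Adj (i a) t

namespace IsHalf

variable {A T : Type*} {H : SimpleGraph A} {S : SimpleGraph T} {i : A → T}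

lemma exists_walk_double (h : IsHalf H S i) {a b : A} (p : H.Walk a b) :
    ∃ q : S.Walk (i a) (i b), q.length = 2 * p.length := by
  induction p with
  | nil => exact ⟨.nil, rfl⟩
  | cons hadj _ ih =>
    obtain ⟨q, hq⟩ := ih
    obtain ⟨-, t, h1, h2⟩ := (h.adj_iff _ _).1 hadj
    exact ⟨.cons h1 (.cons h2 q), by simp only [Walk.length_cons, hq]; ring⟩

/-- The induction along the walk needs a statement for walks starting in either class. -/
lemma exists_walk_half_aux (h : IsHalf H S i) {x y : T} (p : S.Walk x y) (b : A) (hy : y = i b) :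
    (∀ a, x = i a → ∃ q : H.Walk a b, 2 * q.length ≤ p.length) ∧
    (x ∉ Set.range i → ∃ a, S.Adj x (i a) ∧ ∃ q : H.Walk a b, 2 * q.length + 1 ≤ p.length) := by
  induction p with
  | nil =>
    refine ⟨fun a ha => ?_, fun hx => absurd ⟨b, hy.symm⟩ hx⟩
    obtain rfl := h.inj (ha.symm.trans hy)
    exact ⟨.nil, by simp⟩
  | cons hadj p ih =>
    obtain ⟨ih1, ih2⟩ := ih hy
    refine ⟨?_, fun hx => ?_⟩
    · rintro a rfl
      obtain ⟨c, hc, q, hq⟩ := ih2 (h.notMem_range _ _ hadj)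
      -- The first two steps of the walk lead from `a` to `c`, possibly back to `a` itself.
      by_cases hac : a = c
      · subst hac
        exact ⟨q, by simp only [Walk.length_cons]; omega⟩
      · exact ⟨.cons ((h.adj_iff _ _).2 ⟨hac, _, hadj, hc⟩) q,
          by simp only [Walk.length_cons]; omega⟩
    · obtain ⟨c, rfl⟩ := h.mem_range _ _ hx hadj
      obtain ⟨q, hq⟩ := ih1 c rfl
      exact ⟨c, hadj, q, by simp only [Walk.length_cons]; omega⟩

lemma exists_walk_half (h : IsHalf H S i) {a b : A} (p : S.Walk (i a) (i b)) :
    ∃ q : H.Walk a b, 2 * q.length ≤ p.length :=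
  (h.exists_walk_half_aux p b rfl).1 a rfl

lemma two_mul_dist_le (h : IsHalf H S i) (hH : H.Preconnected) (a b : A) :
    2 * H.dist a b ≤ S.dist (i a) (i b) := by
  obtain ⟨p, -⟩ := h.exists_walk_double (hH a b).some
  obtain ⟨p', hp'⟩ := p.reachable.exists_walk_length_eq_dist
  obtain ⟨q, hq⟩ := h.exists_walk_half p'
  have := dist_le q
  omega

lemma ecc_bounds [Fintype A] [Fintype T] (h : IsHalf H S i) (hH : H.Preconnected) (a : A) :
    2 * ecc H a ≤ ecc S (i a) ∧ ecc S (i a) ≤ 2 * ecc H a + 1 := by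
  have le_ecc (b : A) : H.dist a b ≤ ecc H a :=
    Finset.le_sup (f := fun u => H.dist a u) (Finset.mem_univ b)
  constructor
  · obtain ⟨b, -, hb⟩ := Finset.exists_mem_eq_sup Finset.univ ⟨a, Finset.mem_univ a⟩
      (fun u => H.dist a u)
    have h1 : ecc H a = H.dist a b := hb
    have h2 : S.dist (i a) (i b) ≤ ecc S (i a) :=
      Finset.le_sup (f := fun u => S.dist (i a) u) (Finset.mem_univ (i b))
    have := h.two_mul_dist_le hH a b
    omega
  · refine Finset.sup_le fun t _ => ?_
    have double (b : A) : ∃ q : S.Walk (i a) (i b), q.length ≤ 2 * ecc H a := by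
      obtain ⟨p, hp⟩ := (hH a b).exists_walk_length_eq_dist
      obtain ⟨q, hq⟩ := h.exists_walk_double p
      have := le_ecc b
      exact ⟨q, by omega⟩
    by_cases ht : t ∈ Set.range i
    · obtain ⟨b, rfl⟩ := ht
      obtain ⟨q, hq⟩ := double b
      have := dist_le q
      omega
    · obtain ⟨b, hb⟩ := h.exists_adj t ht
      obtain ⟨q, hq⟩ := double b
      have := dist_le (q.concat hb)
      rw [Walk.length_concat] at this
      omega

end IsHalf

section Subdivision

variable {V : Type*} {G : SimpleGraph V}

@[simp] lemma subdivG_adj_inl_inr (v : V) (e : G.edgeSet) :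
    (subdivG G).Adj (Sum.inl v) (Sum.inr e) ↔ v ∈ (e : Sym2 V) := by
  simp [subdivG]

@[simp] lemma subdivG_adj_inr_inl (v : V) (e : G.edgeSet) :
    (subdivG G).Adj (Sum.inr e) (Sum.inl v) ↔ v ∈ (e : Sym2 V) := by
  simp [subdivG]

@[simp] lemma subdivG_not_adj_inl_inl (v w : V) :
    ¬ (subdivG G).Adj (Sum.inl v) (Sum.inl w) := by
  simp [subdivG]

@[simp] lemma subdivG_not_adj_inr_inr (e f : G.edgeSet) :
    ¬ (subdivG G).Adj (Sum.inr e) (Sum.inr f) := by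
  simp [subdivG]

lemma exists_mem_edge (e : G.edgeSet) : ∃ v, v ∈ (e : Sym2 V) :=
  ⟨_, Sym2.out_fst_mem _⟩

lemma isHalf_inl : IsHalf G (subdivG G) Sum.inl where
  inj := Sum.inl_injective
  adj_iff a b := by
    refine ⟨fun h => ⟨h.ne, Sum.inr ⟨s(a, b), h⟩, by simp, by simp⟩, ?_⟩
    rintro ⟨hne, t | e, h1, h2⟩
    · simp at h1
    · have he : (e : Sym2 V) = s(a, b) :=
        (Sym2.mem_and_mem_iff hne).1 ⟨by simpa using h1, by simpa using h2⟩
      have := e.2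
      rwa [he] at this
  notMem_range a t h := by
    rintro ⟨b, rfl⟩
    simp at h
  mem_range s t hs h := by
    rcases s with s | s
    · simp at hs
    · rcases t with t | t
      · simp
      · simp at h
  exists_adj t ht := by
    rcases t with t | e
    · simp at ht
    · simpa using exists_mem_edge e

lemma isHalf_inr (hG : ∀ v, ∃ w, G.Adj v w) : IsHalf (lineG G) (subdivG G) Sum.inr where
  inj := Sum.inr_injective
  adj_iff e f := by
    have hcomm : (∃ v, v ∈ (f : Sym2 V) ∧ v ∈ (e : Sym2 V)) ↔
        ∃ v, v ∈ (e : Sym2 V) ∧ v ∈ (f : Sym2 V) := by simp only [and_comm]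
    simp only [lineG, fromRel_adj, hcomm, or_self, Sum.exists, subdivG_adj_inr_inl,
      subdivG_adj_inl_inr, subdivG_not_adj_inr_inr, false_and, exists_false, or_false]
  notMem_range a t h := by
    rintro ⟨b, rfl⟩
    simp at h
  mem_range s t hs h := by
    rcases s with s | s
    · rcases t with t | t
      · simp at h
      · simp
    · simp at hs
  exists_adj t ht := by
    rcases t with v | e
    · obtain ⟨w, hw⟩ := hG v
      exact ⟨⟨s(v, w), hw⟩, by simp⟩
    · simp at ht

/-- Two edges are joined in `S(G)` through their endpoints, and such a walk shortens to one
in `L(G)`. -/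
lemma lineG_preconnected (hconn : G.Connected) (hG : ∀ v, ∃ w, G.Adj v w) :
    (lineG G).Preconnected := by
  intro e f
  obtain ⟨v, hv⟩ := exists_mem_edge e
  obtain ⟨w, hw⟩ := exists_mem_edge f
  obtain ⟨p, -⟩ := isHalf_inl.exists_walk_double (hconn.preconnected v w).some
  obtain ⟨q, -⟩ := (isHalf_inr hG).exists_walk_half
    (Walk.cons ((subdivG_adj_inr_inl v e).2 hv) (p.concat ((subdivG_adj_inl_inr w f).2 hw)))
  exact q.reachable

end Subdivision

theorem subdivision_ecc_bounds {V : Type*} [Fintype V] (G : SimpleGraph V)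
    (hconn : G.Connected) (hcard : 2 ≤ Fintype.card V) :
    (∀ v : V, 2 * ecc G v ≤ ecc (subdivG G) (Sum.inl v) ∧
      ecc (subdivG G) (Sum.inl v) ≤ 2 * ecc G v + 1) ∧
    (∀ e : G.edgeSet, 2 * ecc (lineG G) e ≤ ecc (subdivG G) (Sum.inr e) ∧
      ecc (subdivG G) (Sum.inr e) ≤ 2 * ecc (lineG G) e + 1) := by
  have : Nontrivial V := Fintype.one_lt_card_iff_nontrivial.1 hcard
  have hG : ∀ v, ∃ w, G.Adj v w := hconn.preconnected.exists_adj_of_nontrivial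
  exact ⟨fun v => isHalf_inl.ecc_bounds hconn.preconnected v,
    fun e => (isHalf_inr hG).ecc_bounds (lineG_preconnected hconn hG) e⟩
end
end

section
/- Let G be a finite simple connected graph with at least two vertices. Then 2ξᶜ(G) + 2ξᶜ(L(G)) ≤ Lξᶜ(S(G)) ≤ 2ξᶜ(G) + 2|E(G)| + 2ξᶜ(L(G)) + 2|E(L(G))|. -/
/-!
Write `S`, `L` for the subdivision and line graph of `G`. A walk in `S` alternates between
vertices and edges of `G`, so reading every second entry of it gives a walk in `G` (if both ends
are vertices) or in `L` (if both ends are edges); conversely walks of `G` and of `L` can be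
subdivided. Hence `S`-distances between two vertices are twice the `G`-distances, and
`S`-distances between two edges are twice the `L`-distances. Since the distance in `S` between a
vertex and an edge is never `2` (it is odd), second degrees in `S` are the degrees in `G` and `L`.

For eccentricities, the doubled distances give `2 e(x) ≤ e(x|S)`. Every edge of `G` is adjacent
in `S` to a vertex, and every vertex to an edge (here `|V| ≥ 2` is used), which costs at most one
extra step, so `e(x|S) ≤ 2 e(x) + 1`. Multiplying by degrees and summing, the extra `1`
contributes the degree sums `2|E(G)|` and `2|E(L)|`.
-/

/-!
Definitions for the leap eccentric connectivity index of graph operations with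
subdivided edges (Song–Tang).
-/

open SimpleGraph Finset
open scoped Classical

noncomputable section

/-! ### Walks and distances in the subdivision graph -/

section Subdivision

variable {V : Type*} {G : SimpleGraph V}

lemma subdivG_adj_lr {v : V} {e : G.edgeSet} :
    (subdivG G).Adj (Sum.inl v) (Sum.inr e) ↔ v ∈ (e : Sym2 V) := by
  simp [subdivG]

lemma subdivG_adj_rl {v : V} {e : G.edgeSet} :
    (subdivG G).Adj (Sum.inr e) (Sum.inl v) ↔ v ∈ (e : Sym2 V) := by
  simp [subdivG]

lemma subdivG_not_adj_ll {v w : V} : ¬ (subdivG G).Adj (Sum.inl v) (Sum.inl w) := by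
  simp [subdivG]

lemma subdivG_not_adj_rr {e f : G.edgeSet} : ¬ (subdivG G).Adj (Sum.inr e) (Sum.inr f) := by
  simp [subdivG]

lemma lineG_adj {e f : G.edgeSet} :
    (lineG G).Adj e f ↔ e ≠ f ∧ ∃ v, v ∈ (e : Sym2 V) ∧ v ∈ (f : Sym2 V) := by
  simp only [lineG, SimpleGraph.fromRel_adj]
  refine and_congr_right fun _ => ⟨?_, Or.inl⟩
  rintro (h | ⟨v, h1, h2⟩)
  · exact h
  · exact ⟨v, h2, h1⟩

/-- Subdividing every step of a walk in `G` doubles its length. -/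
lemma exists_subdiv_walk_of_walk {u v : V} (p : G.Walk u v) :
    ∃ q : (subdivG G).Walk (Sum.inl u) (Sum.inl v), q.length = 2 * p.length := by
  induction p with
  | nil => exact ⟨.nil, rfl⟩
  | @cons a b c h p ih =>
    obtain ⟨q, hq⟩ := ih
    have h1 : (subdivG G).Adj (Sum.inl a) (Sum.inr ⟨s(a, b), h⟩) :=
      subdivG_adj_lr.2 (Sym2.mem_mk_left a b)
    have h2 : (subdivG G).Adj (Sum.inr ⟨s(a, b), h⟩) (Sum.inl b) :=
      subdivG_adj_rl.2 (Sym2.mem_mk_right a b)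
    exact ⟨.cons h1 (.cons h2 q), by simp [hq]; ring⟩

/-- Inserting a shared endpoint into every step of a walk in `L(G)` doubles its length. -/
lemma exists_subdiv_walk_of_line_walk {e f : G.edgeSet} (p : (lineG G).Walk e f) :
    ∃ q : (subdivG G).Walk (Sum.inr e) (Sum.inr f), q.length = 2 * p.length := by
  induction p with
  | nil => exact ⟨.nil, rfl⟩
  | @cons a b c h p ih =>
    obtain ⟨q, hq⟩ := ih
    obtain ⟨-, v, ha, hb⟩ := lineG_adj.1 h
    exact ⟨.cons (subdivG_adj_rl.2 ha) (.cons (subdivG_adj_lr.2 hb) q), by simp [hq]; ring⟩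

/-- Contracting a walk of `S(G)` that ends at a vertex `v` to a walk of `G`. The walk may also
start at an edge, with any endpoint of that edge as the new start; this makes induction on the
walk possible. -/
lemma exists_walk_of_subdiv_walk {x y : V ⊕ G.edgeSet} (q : (subdivG G).Walk x y) :
    ∀ v, y = Sum.inl v →
      (∀ u, x = Sum.inl u → ∃ p : G.Walk u v, 2 * p.length ≤ q.length) ∧
      (∀ e : G.edgeSet, x = Sum.inr e → ∀ u ∈ (e : Sym2 V),
        ∃ p : G.Walk u v, 2 * p.length ≤ q.length + 1) := by
  induction q with
  | nil =>
    rintro v rfl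
    refine ⟨fun u hu => ?_, fun e he => by simp at he⟩
    obtain rfl := Sum.inl.inj hu
    exact ⟨.nil, by simp⟩
  | @cons a b c h q ih =>
    intro v hv
    obtain ⟨ih1, ih2⟩ := ih v hv
    refine ⟨?_, ?_⟩
    · rintro u rfl
      rcases b with w | e
      · exact absurd h subdivG_not_adj_ll
      · obtain ⟨p, hp⟩ := ih2 e rfl u (subdivG_adj_lr.1 h)
        exact ⟨p, by simpa using hp⟩
    · rintro e rfl u hu
      rcases b with w | e'
      · obtain ⟨p, hp⟩ := ih1 w rfl
        by_cases huw : u = w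
        · subst huw
          exact ⟨p, by simp; omega⟩
        · have hw : w ∈ (e : Sym2 V) := subdivG_adj_rl.1 h
          have he : (e : Sym2 V) = s(u, w) := (Sym2.mem_and_mem_iff huw).1 ⟨hu, hw⟩
          have hadj : G.Adj u w := by
            have := e.2
            rwa [he] at this
          exact ⟨.cons hadj p, by simp; omega⟩
      · exact absurd h subdivG_not_adj_rr

/-- Contracting a walk of `S(G)` that ends at an edge `f` to a walk of `L(G)`; dual to
`exists_walk_of_subdiv_walk`. -/
lemma exists_line_walk_of_subdiv_walk {x y : V ⊕ G.edgeSet} (q : (subdivG G).Walk x y) :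
    ∀ f, y = Sum.inr f →
      (∀ e, x = Sum.inr e → ∃ p : (lineG G).Walk e f, 2 * p.length ≤ q.length) ∧
      (∀ u, x = Sum.inl u → ∀ e : G.edgeSet, u ∈ (e : Sym2 V) →
        ∃ p : (lineG G).Walk e f, 2 * p.length ≤ q.length + 1) := by
  induction q with
  | nil =>
    rintro f rfl
    refine ⟨fun e he => ?_, fun u hu => by simp at hu⟩
    obtain rfl := Sum.inr.inj he
    exact ⟨.nil, by simp⟩
  | @cons a b c h q ih =>
    intro f hf
    obtain ⟨ih1, ih2⟩ := ih f hf
    refine ⟨?_, ?_⟩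
    · rintro e rfl
      rcases b with w | e'
      · obtain ⟨p, hp⟩ := ih2 w rfl e (subdivG_adj_rl.1 h)
        exact ⟨p, by simpa using hp⟩
      · exact absurd h subdivG_not_adj_rr
    · rintro u rfl e hu
      rcases b with w | e'
      · exact absurd h subdivG_not_adj_ll
      · obtain ⟨p, hp⟩ := ih1 e' rfl
        by_cases hee : e = e'
        · subst hee
          exact ⟨p, by simp; omega⟩
        · exact ⟨.cons (lineG_adj.2 ⟨hee, u, hu, subdivG_adj_lr.1 h⟩) p, by simp; omega⟩

lemma subdivG_connected (hconn : G.Connected) : (subdivG G).Connected := by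
  have hll (u v : V) : (subdivG G).Reachable (Sum.inl u) (Sum.inl v) := by
    obtain ⟨p⟩ := hconn.preconnected u v
    exact ⟨(exists_subdiv_walk_of_walk p).choose⟩
  obtain ⟨v₀⟩ := hconn.nonempty
  have hv₀ (x : V ⊕ G.edgeSet) : (subdivG G).Reachable x (Sum.inl v₀) := by
    rcases x with u | e
    · exact hll u v₀
    · obtain ⟨u, hu⟩ := exists_mem_edge e
      exact (subdivG_adj_rl.2 hu).reachable.trans (hll u v₀)
  have : Nonempty (V ⊕ G.edgeSet) := ⟨Sum.inl v₀⟩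
  exact ⟨fun x y => (hv₀ x).trans (hv₀ y).symm⟩

lemma dist_subdivG_inl (hconn : G.Connected) (u v : V) :
    (subdivG G).dist (Sum.inl u) (Sum.inl v) = 2 * G.dist u v := by
  apply le_antisymm
  · obtain ⟨p, hp⟩ := hconn.exists_walk_length_eq_dist u v
    obtain ⟨q, hq⟩ := exists_subdiv_walk_of_walk p
    rw [← hp, ← hq]
    exact SimpleGraph.dist_le q
  · obtain ⟨q, hq⟩ := (subdivG_connected hconn).exists_walk_length_eq_dist (Sum.inl u) (Sum.inl v)
    obtain ⟨p, hp⟩ := (exists_walk_of_subdiv_walk q v rfl).1 u rfl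
    have := SimpleGraph.dist_le p
    omega

lemma dist_subdivG_inr (hconn : G.Connected) (e f : G.edgeSet) :
    (subdivG G).dist (Sum.inr e) (Sum.inr f) = 2 * (lineG G).dist e f := by
  obtain ⟨q, hq⟩ := (subdivG_connected hconn).exists_walk_length_eq_dist (Sum.inr e) (Sum.inr f)
  obtain ⟨p, hp⟩ := (exists_line_walk_of_subdiv_walk q f rfl).1 e rfl
  apply le_antisymm
  · obtain ⟨p', hp'⟩ := p.reachable.exists_walk_length_eq_dist
    obtain ⟨q', hq'⟩ := exists_subdiv_walk_of_line_walk p'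
    rw [← hp', ← hq']
    exact SimpleGraph.dist_le q'
  · have := SimpleGraph.dist_le p
    omega

lemma dist_subdivG_inl_inr_ne_two (hconn : G.Connected) (u : V) (e : G.edgeSet) :
    (subdivG G).dist (Sum.inl u) (Sum.inr e) ≠ 2 := by
  intro h
  obtain ⟨q, hq⟩ := (subdivG_connected hconn).exists_walk_length_eq_dist (Sum.inl u) (Sum.inr e)
  rw [h] at hq
  match q, hq with
  | .cons (v := Sum.inl _) h1 _, _ => exact subdivG_not_adj_ll h1
  | .cons (v := Sum.inr _) _ (.cons h2 r), hq =>
    rw [SimpleGraph.Walk.eq_of_length_eq_zero (p := r) (by simpa using hq)] at h2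
    exact subdivG_not_adj_rr h2

end Subdivision

/-! ### Second degrees and eccentricities in the subdivision graph -/

section Finite

variable {V : Type*} [Fintype V] {G : SimpleGraph V}

lemma deg2_subdivG_inl (hconn : G.Connected) (v : V) :
    deg2 (subdivG G) (Sum.inl v) = deg1 G v := by
  have h (u : V) : 2 * G.dist v u = 2 ↔ G.Adj v u := by
    rw [← SimpleGraph.dist_eq_one_iff_adj]; omega
  simp only [deg2, deg1, Finset.card_filter, Fintype.sum_sum_type, dist_subdivG_inl hconn,
    dist_subdivG_inl_inr_ne_two hconn, h, if_false, Finset.sum_const_zero, add_zero]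

lemma deg2_subdivG_inr (hconn : G.Connected) (e : G.edgeSet) :
    deg2 (subdivG G) (Sum.inr e) = deg1 (lineG G) e := by
  have h (f : G.edgeSet) : 2 * (lineG G).dist e f = 2 ↔ (lineG G).Adj e f := by
    rw [← SimpleGraph.dist_eq_one_iff_adj]; omega
  have h' (v : V) : (subdivG G).dist (Sum.inr e) (Sum.inl v) ≠ 2 := by
    rw [SimpleGraph.dist_comm]
    exact dist_subdivG_inl_inr_ne_two hconn v e
  simp only [deg2, deg1, Finset.card_filter, Fintype.sum_sum_type, dist_subdivG_inr hconn,
    h', h, if_false, Finset.sum_const_zero, zero_add]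

lemma dist_le_ecc (v u : V) : G.dist v u ≤ ecc G v :=
  Finset.le_sup (f := fun u => G.dist v u) (Finset.mem_univ u)

lemma exists_dist_eq_ecc (v : V) : ∃ u, G.dist v u = ecc G v := by
  obtain ⟨u, -, hu⟩ := Finset.exists_mem_eq_sup Finset.univ ⟨v, Finset.mem_univ v⟩
    (fun u => G.dist v u)
  exact ⟨u, hu.symm⟩

lemma le_ecc_subdivG_inl (hconn : G.Connected) (v : V) :
    2 * ecc G v ≤ ecc (subdivG G) (Sum.inl v) := by
  obtain ⟨u, hu⟩ := exists_dist_eq_ecc (G := G) v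
  rw [← hu, ← dist_subdivG_inl hconn]
  exact dist_le_ecc _ _

lemma le_ecc_subdivG_inr (hconn : G.Connected) (e : G.edgeSet) :
    2 * ecc (lineG G) e ≤ ecc (subdivG G) (Sum.inr e) := by
  obtain ⟨f, hf⟩ := exists_dist_eq_ecc (G := lineG G) e
  rw [← hf, ← dist_subdivG_inr hconn]
  exact dist_le_ecc _ _

lemma ecc_subdivG_inl_le (hconn : G.Connected) (v : V) :
    ecc (subdivG G) (Sum.inl v) ≤ 2 * ecc G v + 1 := by
  refine Finset.sup_le ?_
  rintro (u | e) -
  · have := dist_le_ecc (G := G) v u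
    rw [dist_subdivG_inl hconn]
    omega
  · obtain ⟨u, hu⟩ := exists_mem_edge e
    have h1 := dist_le_ecc (G := G) v u
    have h2 := (subdivG_connected hconn).dist_triangle
      (u := Sum.inl v) (v := Sum.inl u) (w := Sum.inr e)
    rw [dist_subdivG_inl hconn, SimpleGraph.dist_eq_one_iff_adj.2 (subdivG_adj_lr.2 hu)] at h2
    omega

lemma ecc_subdivG_inr_le (hconn : G.Connected) (hcard : 2 ≤ Fintype.card V) (e : G.edgeSet) :
    ecc (subdivG G) (Sum.inr e) ≤ 2 * ecc (lineG G) e + 1 := by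
  refine Finset.sup_le ?_
  rintro (u | f) -
  · have : Nontrivial V := Fintype.one_lt_card_iff_nontrivial.1 hcard
    obtain ⟨w, hw⟩ := hconn.preconnected.exists_adj_of_nontrivial u
    let f : G.edgeSet := ⟨s(u, w), hw⟩
    have hu : u ∈ (f : Sym2 V) := Sym2.mem_mk_left u w
    have h1 := dist_le_ecc (G := lineG G) e f
    have h2 := (subdivG_connected hconn).dist_triangle
      (u := Sum.inr e) (v := Sum.inr f) (w := Sum.inl u)
    rw [dist_subdivG_inr hconn, SimpleGraph.dist_eq_one_iff_adj.2 (subdivG_adj_rl.2 hu)] at h2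
    omega
  · have := dist_le_ecc (G := lineG G) e f
    rw [dist_subdivG_inr hconn]
    omega

/-! ### Degree sums -/

/-- The handshake lemma. -/
lemma sum_deg1 (X : SimpleGraph V) : ∑ v, deg1 X v = 2 * numEdges X := by
  have h1 : numEdges X = X.edgeFinset.card := by
    rw [numEdges, ← SimpleGraph.coe_edgeFinset, Set.ncard_coe_finset]
  have h2 : ∑ v, X.degree v = 2 * X.edgeFinset.card := by
    convert X.sum_degrees_eq_twice_card_edges
  rw [h1, ← h2]
  refine Finset.sum_congr rfl fun v _ => ?_
  rw [deg1, ← SimpleGraph.card_neighborFinset_eq_degree, SimpleGraph.neighborFinset_eq_filter]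

lemma two_mul_eci (X : SimpleGraph V) : 2 * eci X = ∑ v, deg1 X v * (2 * ecc X v) := by
  rw [eci, Finset.mul_sum]
  exact Finset.sum_congr rfl fun v _ => by ring

lemma two_mul_eci_add (X : SimpleGraph V) :
    2 * eci X + 2 * numEdges X = ∑ v, deg1 X v * (2 * ecc X v + 1) := by
  rw [two_mul_eci, ← sum_deg1, ← Finset.sum_add_distrib]
  rfl

end Finite

theorem subdivision_leapECI_bounds {V : Type*} [Fintype V] (G : SimpleGraph V)
    (hconn : G.Connected) (hcard : 2 ≤ Fintype.card V) :
    2 * eci G + 2 * eci (lineG G) ≤ leapECI (subdivG G) ∧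
    leapECI (subdivG G) ≤
      2 * eci G + 2 * numEdges G + 2 * eci (lineG G) + 2 * numEdges (lineG G) := by
  have hS : leapECI (subdivG G) =
      ∑ v, deg1 G v * ecc (subdivG G) (Sum.inl v) +
      ∑ e, deg1 (lineG G) e * ecc (subdivG G) (Sum.inr e) := by
    simp only [leapECI, Fintype.sum_sum_type, deg2_subdivG_inl hconn, deg2_subdivG_inr hconn]
  rw [hS]
  constructor
  · rw [two_mul_eci, two_mul_eci]
    exact add_le_add
      (Finset.sum_le_sum fun v _ => Nat.mul_le_mul_left _ (le_ecc_subdivG_inl hconn v))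
      (Finset.sum_le_sum fun e _ => Nat.mul_le_mul_left _ (le_ecc_subdivG_inr hconn e))
  · rw [add_assoc (2 * eci G + 2 * numEdges G), two_mul_eci_add, two_mul_eci_add]
    exact add_le_add
      (Finset.sum_le_sum fun v _ => Nat.mul_le_mul_left _ (ecc_subdivG_inl_le hconn v))
      (Finset.sum_le_sum fun e _ => Nat.mul_le_mul_left _ (ecc_subdivG_inr_le hconn hcard e))
end
end

section
/- Let G be a finite simple connected {C₃,C₄}-free graph with at least two vertices. Then (i) Lξᶜ(Q(G)) ≥ ξᶜ(G) + Lξᶜ(G) + M₁(G) + ξᶜ(L(G)) + Lξᶜ(L(G)), and (ii) Lξᶜ(Q(G)) ≤ ξᶜ(G) + Lξᶜ(G) + M₁(G) + ξᶜ(L(G)) + Lξᶜ(L(G)) + M₁(L(G)). -/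
/-!
The index of `Q(G)` splits into a sum over vertices and a sum over edges of `G`.

For vertices `u ≠ v` one has `d_Q(u, v) = d_G(u, v) + 1` (`qGraph_dist_inl_inl`), and for edges
`d_Q(e, f) = d_L(e, f)` (`qGraph_dist_inr_inr`). Hence `e(v|Q) = e(v|G) + 1` for a vertex, while
`e(e|L) ≤ e(e|Q) ≤ e(e|L) + 1` for an edge.

Since `G` has no triangle and no 4-cycle, `d₂(v|Q) = d₁(v|G) + d₂(v|G)` for a vertex
(`qGraph_deg2_inl`) and `d₂(e|Q) = d₁(e|L) + d₂(e|L)` for an edge (`qGraph_deg2_inr`).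

In any graph `d₁(v) + d₂(v)` is at most the number of walks of length two from `v`
(`deg1_add_deg2_le`), with equality in a `{C₃,C₄}`-free graph (`deg1_add_deg2_eq`), and all the walks
of length two together number `M₁` (`sum_card_twoWalks`). So the vertex sum
`∑ (d₁ + d₂)(e(v|G) + 1)` is exactly `ξᶜ(G) + Lξᶜ(G) + M₁(G)`, and the edge sum lies between
`ξᶜ(L(G)) + Lξᶜ(L(G))` and that quantity plus `∑ (d₁ + d₂) ≤ M₁(L(G))`.
-/

/-!
Definitions for the leap eccentric connectivity index of graph operations with
subdivided edges (Song–Tang).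
-/

open SimpleGraph Finset
open scoped Classical

noncomputable section

/-! ### Graphs without short cycles -/

/-- A triangle of `G` would be an induced `C₃`. -/
lemma not_adj_of_fFree_three {V : Type*} {G : SimpleGraph V}
    (hC3 : fFree (SimpleGraph.cycleGraph 3) G) {a b c : V} (hab : G.Adj a b) (hbc : G.Adj b c) :
    ¬ G.Adj a c := by
  intro hac
  have hadj : ∀ i j : Fin 3, G.Adj (![a, b, c] i) (![a, b, c] j) ↔
      (SimpleGraph.cycleGraph 3).Adj i j := by
    intro i j
    fin_cases i <;> fin_cases j <;>
      simp [SimpleGraph.cycleGraph_adj, hab, hbc, hac, hab.symm, hbc.symm, hac.symm] <;> decide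
  have hinj : Function.Injective ![a, b, c] := by
    intro i j h
    have h1 := hab.ne; have h2 := hbc.ne; have h3 := hac.ne
    fin_cases i <;> fin_cases j <;> simp_all
  exact (hC3 (Set.range ![a, b, c])).false
    ⟨Equiv.ofInjective _ hinj, fun {i j} => by simpa using hadj i j⟩

/-- Distinct vertices have at most one common neighbour. Without triangles the two diagonals of a
4-cycle are missing, so the 4-cycle would be induced and contradict `hC4`. -/
lemma eq_of_fFree_four {V : Type*} {G : SimpleGraph V}
    (hC3 : fFree (SimpleGraph.cycleGraph 3) G) (hC4 : fFree (SimpleGraph.cycleGraph 4) G)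
    {v a u b : V} (hva : G.Adj v a) (hau : G.Adj a u) (hvb : G.Adj v b) (hbu : G.Adj b u)
    (hvu : v ≠ u) : a = b := by
  by_contra hne
  have nvu : ¬ G.Adj v u := not_adj_of_fFree_three hC3 hva hau
  have nab : ¬ G.Adj a b := not_adj_of_fFree_three hC3 hva.symm hvb
  have nuv : ¬ G.Adj u v := fun h => nvu h.symm
  have nba : ¬ G.Adj b a := fun h => nab h.symm
  have hadj : ∀ i j : Fin 4, G.Adj (![v, a, u, b] i) (![v, a, u, b] j) ↔
      (SimpleGraph.cycleGraph 4).Adj i j := by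
    intro i j
    fin_cases i <;> fin_cases j <;>
      simp [SimpleGraph.cycleGraph_adj, hva, hau, hvb, hbu, hva.symm, hau.symm, hvb.symm,
        hbu.symm, nvu, nab, nuv, nba] <;> decide
  have hinj : Function.Injective ![v, a, u, b] := by
    intro i j h
    have h1 := hva.ne; have h2 := hau.ne; have h3 := hvb.ne; have h4 := hbu.ne
    fin_cases i <;> fin_cases j <;> simp_all
  exact (hC4 (Set.range ![v, a, u, b])).false
    ⟨Equiv.ofInjective _ hinj, fun {i j} => by simpa using hadj i j⟩

/-- No connectedness is needed: an unreachable pair has the junk distance `0`, not `2`. -/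
lemma dist_eq_two_iff {W : Type*} {X : SimpleGraph W} {a b : W} :
    X.dist a b = 2 ↔ a ≠ b ∧ ¬ X.Adj a b ∧ ∃ c, X.Adj a c ∧ X.Adj c b := by
  constructor
  · intro h
    refine ⟨?_, ?_, ?_⟩
    · rintro rfl; simp at h
    · intro h'; rw [SimpleGraph.dist_eq_one_iff_adj.2 h'] at h; omega
    · have hr : X.Reachable a b := by
        by_contra hr
        rw [SimpleGraph.dist_eq_zero_of_not_reachable hr] at h; omega
      obtain ⟨p, hp⟩ := hr.exists_walk_length_eq_dist
      rw [h] at hp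
      match p, hp with
      | .cons h1 (.cons h2 .nil), _ => exact ⟨_, h1, h2⟩
  · rintro ⟨hne, hna, c, hac, hcb⟩
    have h2 : X.dist a b ≤ 2 :=
      SimpleGraph.dist_le (SimpleGraph.Walk.cons hac (SimpleGraph.Walk.cons hcb .nil))
    have hr : X.Reachable a b := hac.reachable.trans hcb.reachable
    have h0 := hr.pos_dist_of_ne hne
    have h1 : X.dist a b ≠ 1 := fun h => hna (SimpleGraph.dist_eq_one_iff_adj.1 h)
    omega

/-! ### Adjacency in the line graph and in `Q(G)` -/

section Adjacency
variable {V : Type*} {G : SimpleGraph V}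

@[simp] lemma qGraph_adj_inl_inl {u v : V} : ¬ (qGraph G).Adj (.inl u) (.inl v) := by
  simp [qGraph]

@[simp] lemma qGraph_adj_inl_inr {v : V} {e : G.edgeSet} :
    (qGraph G).Adj (.inl v) (.inr e) ↔ v ∈ (e : Sym2 V) := by
  simp [qGraph]

@[simp] lemma qGraph_adj_inr_inl {v : V} {e : G.edgeSet} :
    (qGraph G).Adj (.inr e) (.inl v) ↔ v ∈ (e : Sym2 V) := by
  simp [qGraph]

@[simp] lemma qGraph_adj_inr_inr {e f : G.edgeSet} :
    (qGraph G).Adj (.inr e) (.inr f) ↔ (lineG G).Adj e f := by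
  simp only [lineG_adj, qGraph, SimpleGraph.fromRel_adj, and_comm, or_self, ne_eq,
    Sum.inr.injEq]

lemma adj_of_mem_edge {e : G.edgeSet} {u v : V} (hu : u ∈ (e : Sym2 V)) (hv : v ∈ (e : Sym2 V))
    (h : u ≠ v) : G.Adj u v := by
  have := (Sym2.mem_and_mem_iff h).1 ⟨hu, hv⟩
  rw [← SimpleGraph.mem_edgeSet, ← this]; exact e.2

lemma dist_le_one_of_mem_edge {e : G.edgeSet} {u v : V} (hu : u ∈ (e : Sym2 V))
    (hv : v ∈ (e : Sym2 V)) : G.dist u v ≤ 1 := by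
  by_cases h : u = v
  · simp [h]
  · exact (SimpleGraph.dist_eq_one_iff_adj.2 (adj_of_mem_edge hu hv h)).le

end Adjacency

/-! ### Distances in `Q(G)` -/

section Distance
variable {V : Type*} {G : SimpleGraph V}

/-- A walk of `G` lifts to a walk of `Q(G)` running through its edges. Starting from an arbitrary
edge `e` at `u`, rather than from `u` itself, is what makes the induction close. -/
lemma exists_qWalk_of_walk {u v : V} (p : G.Walk u v) :
    ∀ e : G.edgeSet, u ∈ (e : Sym2 V) →
      ∃ q : (qGraph G).Walk (.inr e) (.inl v), q.length ≤ p.length + 1 := by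
  induction p with
  | nil => exact fun e he => ⟨.cons (qGraph_adj_inr_inl.2 he) .nil, by simp⟩
  | @cons u w v h p ih =>
    intro e he
    obtain ⟨q, hq⟩ := ih ⟨s(u, w), h⟩ (by simp)
    by_cases hef : e = ⟨s(u, w), h⟩
    · subst hef
      exact ⟨q, by simp; omega⟩
    · refine ⟨.cons (qGraph_adj_inr_inr.2 (lineG_adj.2 ⟨hef, u, he, by simp⟩)) q, ?_⟩
      simp; omega

/-- The converse of `exists_qWalk_of_walk`: a walk of `Q(G)` ending at the vertex `v` is longer than
the distance in `G` from its start to `v`, unless it starts at `v` itself; the distance from an edge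
is measured from the closer endpoint. The endpoint `b` is a variable with an equation so that
induction on `q` applies. -/
lemma dist_le_of_qWalk (hconn : G.Connected) {v : V} {a b : V ⊕ G.edgeSet}
    (q : (qGraph G).Walk a b) (hb : b = .inl v) :
    (∀ u, a = .inl u → u = v ∨ G.dist u v + 1 ≤ q.length) ∧
    (∀ e, a = .inr e → ∃ u ∈ (e : Sym2 V), G.dist u v + 1 ≤ q.length) := by
  induction q with
  | nil => subst hb; simp
  | @cons a c b h q ih =>
    obtain ⟨ih1, ih2⟩ := ih hb
    constructor
    · rintro u rfl
      right
      rcases c with w | e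
      · simp at h
      · obtain ⟨u', hu', hd⟩ := ih2 e rfl
        have h1 := hconn.dist_triangle (u := u) (v := u') (w := v)
        have h2 := dist_le_one_of_mem_edge (qGraph_adj_inl_inr.1 h) hu'
        simp only [SimpleGraph.Walk.length_cons]; omega
    · rintro e rfl
      rcases c with w | f
      · refine ⟨w, qGraph_adj_inr_inl.1 h, ?_⟩
        rcases ih1 w rfl with rfl | hd
        · simp
        · simp only [SimpleGraph.Walk.length_cons]; omega
      · obtain ⟨u', hu', hd⟩ := ih2 f rfl
        obtain ⟨-, w, hwe, hwf⟩ := lineG_adj.1 (qGraph_adj_inr_inr.1 h)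
        have h1 := hconn.dist_triangle (u := w) (v := u') (w := v)
        have h2 := dist_le_one_of_mem_edge hwf hu'
        refine ⟨w, hwe, ?_⟩
        simp only [SimpleGraph.Walk.length_cons]; omega

/-- A walk of `Q(G)` ending at the edge `f` can be rerouted inside `L(G)` without getting longer:
a detour `e, u, e'` through a vertex `u` is replaced by the single step from `e` to `e'`. For walks
starting at a vertex `u`, the first clause allows every edge at `u` as the new start, which is what
the detour needs. -/
lemma exists_lineWalk_of_qWalk {f : G.edgeSet} {a b : V ⊕ G.edgeSet}
    (q : (qGraph G).Walk a b) (hb : b = .inr f) :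
    (∀ u, a = .inl u → ∀ e : G.edgeSet, u ∈ (e : Sym2 V) →
      ∃ p : (lineG G).Walk e f, p.length ≤ q.length) ∧
    (∀ e, a = .inr e → ∃ p : (lineG G).Walk e f, p.length ≤ q.length) := by
  induction q with
  | nil =>
    subst hb
    refine ⟨by simp, ?_⟩
    rintro e he
    cases he
    exact ⟨.nil, by simp⟩
  | @cons a c b h q ih =>
    obtain ⟨ih1, ih2⟩ := ih hb
    constructor
    · rintro u rfl e hu
      rcases c with w | e'
      · simp at h
      · obtain ⟨p, hp⟩ := ih2 e' rfl
        by_cases hee : e = e'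
        · subst hee
          exact ⟨p, by simp; omega⟩
        · exact ⟨.cons (lineG_adj.2 ⟨hee, u, hu, qGraph_adj_inl_inr.1 h⟩) p, by simp; omega⟩
    · rintro e rfl
      rcases c with w | e'
      · obtain ⟨p, hp⟩ := ih1 w rfl e (qGraph_adj_inr_inl.1 h)
        exact ⟨p, by simp; omega⟩
      · obtain ⟨p, hp⟩ := ih2 e' rfl
        exact ⟨.cons (qGraph_adj_inr_inr.1 h) p, by simp; omega⟩

lemma exists_edge_of_vertex [Fintype V] (hconn : G.Connected) (hcard : 2 ≤ Fintype.card V)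
    (v : V) : ∃ e : G.edgeSet, v ∈ (e : Sym2 V) := by
  have : Nontrivial V := Fintype.one_lt_card_iff_nontrivial.1 hcard
  obtain ⟨w, hw⟩ := hconn.preconnected.exists_adj_of_nontrivial v
  exact ⟨⟨s(v, w), hw⟩, by simp⟩

lemma qGraph_connected [Fintype V] (hconn : G.Connected) (hcard : 2 ≤ Fintype.card V) :
    (qGraph G).Connected := by
  have key : ∀ (e : G.edgeSet) (v : V), (qGraph G).Reachable (.inr e) (.inl v) := by
    intro e v
    obtain ⟨p⟩ := hconn.preconnected e.1.out.1 v
    obtain ⟨q, -⟩ := exists_qWalk_of_walk p e (Sym2.out_fst_mem _)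
    exact ⟨q⟩
  obtain ⟨v₀⟩ := hconn.nonempty
  have key2 : ∀ a, (qGraph G).Reachable a (.inl v₀) := by
    rintro (u | e)
    · obtain ⟨e, he⟩ := exists_edge_of_vertex hconn hcard u
      exact (qGraph_adj_inl_inr.2 he).reachable.trans (key e v₀)
    · exact key e v₀
  have : Nonempty (V ⊕ G.edgeSet) := ⟨.inl v₀⟩
  exact ⟨fun a b => (key2 a).trans (key2 b).symm⟩

lemma qGraph_dist_inr_inl_le (hconn : G.Connected) {e : G.edgeSet} {u : V}
    (hu : u ∈ (e : Sym2 V)) (v : V) :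
    (qGraph G).dist (.inr e) (.inl v) ≤ G.dist u v + 1 := by
  obtain ⟨p, hp⟩ := hconn.exists_walk_length_eq_dist u v
  obtain ⟨q, hq⟩ := exists_qWalk_of_walk p e hu
  exact (SimpleGraph.dist_le q).trans (hp ▸ hq)

lemma qGraph_dist_inl_inl [Fintype V] (hconn : G.Connected) (hcard : 2 ≤ Fintype.card V)
    {u v : V} (huv : u ≠ v) :
    (qGraph G).dist (.inl u) (.inl v) = G.dist u v + 1 := by
  have hQ := qGraph_connected hconn hcard
  apply le_antisymm
  · obtain ⟨p, hp⟩ := hconn.exists_walk_length_eq_dist u v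
    cases p with
    | nil => exact absurd rfl huv
    | @cons _ w _ h p =>
      obtain ⟨q, hq⟩ := exists_qWalk_of_walk p ⟨s(u, w), h⟩ (by simp)
      refine (SimpleGraph.dist_le (.cons (qGraph_adj_inl_inr.2 (by simp)) q)).trans ?_
      simp at hp ⊢; omega
  · obtain ⟨q, hq⟩ := hQ.exists_walk_length_eq_dist (.inl u) (.inl v)
    rw [← hq]
    exact ((dist_le_of_qWalk hconn q rfl).1 u rfl).resolve_left huv

lemma qGraph_dist_inr_inr [Fintype V] (hconn : G.Connected) (hcard : 2 ≤ Fintype.card V)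
    (e f : G.edgeSet) :
    (qGraph G).dist (.inr e) (.inr f) = (lineG G).dist e f := by
  obtain ⟨q, hq⟩ := (qGraph_connected hconn hcard).exists_walk_length_eq_dist (.inr e) (.inr f)
  obtain ⟨p, hp⟩ := (exists_lineWalk_of_qWalk q rfl).2 e rfl
  apply le_antisymm
  · obtain ⟨p', hp'⟩ := p.reachable.exists_walk_length_eq_dist
    let φ : lineG G →g qGraph G := ⟨Sum.inr, fun h => qGraph_adj_inr_inr.2 h⟩
    have := SimpleGraph.dist_le (p'.map φ)
    rwa [SimpleGraph.Walk.length_map, hp'] at this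
  · exact (SimpleGraph.dist_le p).trans (hq ▸ hp)

end Distance

/-! ### Eccentricities in `Q(G)` -/

section Eccentricity
variable {V : Type*} [Fintype V] {G : SimpleGraph V}

lemma dist_le_ecc_s4 {W : Type*} [Fintype W] (X : SimpleGraph W) (a b : W) :
    X.dist a b ≤ ecc X a :=
  Finset.le_sup (f := fun u => X.dist a u) (Finset.mem_univ b)

lemma ecc_le {W : Type*} [Fintype W] {X : SimpleGraph W} {a : W} {n : ℕ}
    (h : ∀ b, X.dist a b ≤ n) : ecc X a ≤ n :=
  Finset.sup_le fun b _ => h b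

/-- Distances between vertices grow by one in `Q(G)`, and no edge is farther from `v` than
`ecc G v + 1`. The assumption on the order of `G` is needed: on a single vertex both
eccentricities vanish. -/
lemma qGraph_ecc_inl (hconn : G.Connected) (hcard : 2 ≤ Fintype.card V) (v : V) :
    ecc (qGraph G) (.inl v) = ecc G v + 1 := by
  apply le_antisymm
  · apply ecc_le
    rintro (u | e)
    · by_cases h : v = u
      · simp [h]
      · rw [qGraph_dist_inl_inl hconn hcard h]
        have := dist_le_ecc_s4 G v u
        omega
    · have h1 := qGraph_dist_inr_inl_le hconn (Sym2.out_fst_mem e.1) v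
      have h2 := dist_le_ecc_s4 G v e.1.out.1
      rw [SimpleGraph.dist_comm] at h1 h2
      omega
  · obtain ⟨u, -, hu⟩ := Finset.exists_mem_eq_sup (Finset.univ : Finset V) ⟨v, Finset.mem_univ v⟩
      (fun u => G.dist v u)
    have hu : ecc G v = G.dist v u := hu
    have hne : v ≠ u := by
      rintro rfl
      have : Nontrivial V := Fintype.one_lt_card_iff_nontrivial.1 hcard
      obtain ⟨w, hw⟩ := hconn.preconnected.exists_adj_of_nontrivial v
      have h1 := dist_le_ecc_s4 G v w
      rw [SimpleGraph.dist_eq_one_iff_adj.2 hw, hu, SimpleGraph.dist_self] at h1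
      omega
    rw [hu, ← qGraph_dist_inl_inl hconn hcard hne]
    exact dist_le_ecc_s4 _ _ _

lemma le_qGraph_ecc_inr (hconn : G.Connected) (hcard : 2 ≤ Fintype.card V) (e : G.edgeSet) :
    ecc (lineG G) e ≤ ecc (qGraph G) (.inr e) := by
  apply ecc_le
  intro f
  rw [← qGraph_dist_inr_inr hconn hcard]
  exact dist_le_ecc_s4 _ _ _

/-- Every vertex lies on an edge, which is at most `ecc (lineG G) e` away from `e`. -/
lemma qGraph_ecc_inr_le (hconn : G.Connected) (hcard : 2 ≤ Fintype.card V) (e : G.edgeSet) :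
    ecc (qGraph G) (.inr e) ≤ ecc (lineG G) e + 1 := by
  apply ecc_le
  rintro (v | f)
  · obtain ⟨f, hf⟩ := exists_edge_of_vertex hconn hcard v
    have h1 := (qGraph_connected hconn hcard).dist_triangle (u := .inr e) (v := .inr f)
      (w := .inl v)
    rw [qGraph_dist_inr_inr hconn hcard,
      SimpleGraph.dist_eq_one_iff_adj.2 (qGraph_adj_inr_inl.2 hf)] at h1
    have h2 := dist_le_ecc_s4 (lineG G) e f
    omega
  · rw [qGraph_dist_inr_inr hconn hcard]
    exact (dist_le_ecc_s4 _ _ _).trans (Nat.le_succ _)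

end Eccentricity

/-! ### Second degrees in `Q(G)` and walks of length two -/

section Counting

/-- The walks `v, w, u` of length two starting at `v`, recorded as the pairs `⟨w, u⟩`. -/
def twoWalks {W : Type*} [Fintype W] (X : SimpleGraph W) (v : W) : Finset (Σ _ : W, W) :=
  (Finset.univ.filter (fun w => X.Adj v w)).sigma
    (fun w => Finset.univ.filter (fun u => X.Adj w u))

lemma mem_twoWalks {W : Type*} [Fintype W] {X : SimpleGraph W} {v : W} {x : Σ _ : W, W} :
    x ∈ twoWalks X v ↔ X.Adj v x.1 ∧ X.Adj x.1 x.2 := by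
  simp [twoWalks]

/-- Counting walks of length two by their middle vertex `w` gives `d₁(w)²` for each `w`. -/
lemma sum_card_twoWalks {W : Type*} [Fintype W] (X : SimpleGraph W) :
    ∑ v, (twoWalks X v).card = zagrebM1 X := by
  have h : ∀ v, (twoWalks X v).card = ∑ w, if X.Adj v w then deg1 X w else 0 := by
    intro v
    rw [twoWalks, Finset.card_sigma, Finset.sum_filter]
    rfl
  simp only [h]
  rw [Finset.sum_comm, zagrebM1]
  refine Finset.sum_congr rfl fun w _ => ?_
  rw [← Finset.sum_filter, Finset.sum_const, smul_eq_mul, sq]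
  simp only [SimpleGraph.adj_comm, deg1]

/-- The walks of length two from `v` that return to `v` are counted by `d₁(v)`. -/
lemma card_twoWalks {W : Type*} [Fintype W] (X : SimpleGraph W) (v : W) :
    (twoWalks X v).card = deg1 X v + ((twoWalks X v).filter (fun x => x.2 ≠ v)).card := by
  rw [← Finset.card_filter_add_card_filter_not (s := twoWalks X v) (fun x => x.2 = v)]
  congr 1
  refine Finset.card_bij' (fun x _ => x.1) (fun w _ => ⟨w, v⟩) ?_ ?_ ?_ ?_
  · intro x hx
    simp only [Finset.mem_filter, mem_twoWalks, Finset.mem_univ, true_and] at hx ⊢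
    exact hx.1.1
  · intro w hw
    simp only [Finset.mem_filter, mem_twoWalks, Finset.mem_univ, true_and] at hw ⊢
    exact ⟨⟨hw, hw.symm⟩, trivial⟩
  · rintro ⟨w, u⟩ hx
    simp only [Finset.mem_filter] at hx
    simp [hx.2]
  · intros; rfl

lemma deg1_add_deg2_le {W : Type*} [Fintype W] (X : SimpleGraph W) (v : W) :
    deg1 X v + deg2 X v ≤ (twoWalks X v).card := by
  rw [card_twoWalks]
  refine Nat.add_le_add_left ?_ _
  refine Finset.card_le_card_of_surjOn (fun x => x.2) ?_
  intro u hu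
  simp only [Finset.coe_filter, Finset.mem_univ, true_and, Set.mem_ofPred_eq,
    dist_eq_two_iff] at hu
  obtain ⟨hne, -, w, h1, h2⟩ := hu
  exact ⟨⟨w, u⟩, by simpa [mem_twoWalks] using ⟨⟨h1, h2⟩, hne.symm⟩, rfl⟩

/-- An edge `e` is at distance two from the vertex `v` in `Q(G)` exactly when `v ∉ e` and
some edge at `v` meets `e`, i.e. when `v ∉ e` and an endpoint of `e` is a neighbour of `v`. -/
lemma qGraph_dist_inl_inr_eq_two {V : Type*} {G : SimpleGraph V} {v : V}
    {e : G.edgeSet} :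
    (qGraph G).dist (.inl v) (.inr e) = 2 ↔
      v ∉ (e : Sym2 V) ∧ ∃ w ∈ (e : Sym2 V), G.Adj v w := by
  rw [dist_eq_two_iff]
  constructor
  · rintro ⟨-, hn, (u | f), h1, h2⟩
    · simp at h1
    · rw [qGraph_adj_inl_inr] at hn h1
      obtain ⟨-, w, hwf, hwe⟩ := lineG_adj.1 (qGraph_adj_inr_inr.1 h2)
      exact ⟨hn, w, hwe, adj_of_mem_edge h1 hwf (by rintro rfl; exact hn hwe)⟩
  · rintro ⟨hn, w, hwe, hvw⟩
    refine ⟨by simp, by simpa using hn, .inr ⟨s(v, w), hvw⟩, by simp, ?_⟩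
    rw [qGraph_adj_inr_inr, lineG_adj]
    refine ⟨?_, w, by simp, hwe⟩
    rintro rfl
    simp at hn

variable {V : Type*} [Fintype V] {G : SimpleGraph V}

/-- In a `{C₃,C₄}`-free graph a walk of length two that does not return ends at distance exactly
two, and is determined by its end. -/
lemma deg1_add_deg2_eq (hC3 : fFree (SimpleGraph.cycleGraph 3) G)
    (hC4 : fFree (SimpleGraph.cycleGraph 4) G) (v : V) :
    deg1 G v + deg2 G v = (twoWalks G v).card := by
  refine le_antisymm (deg1_add_deg2_le G v) ?_
  rw [card_twoWalks]
  refine Nat.add_le_add_left ?_ _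
  refine Finset.card_le_card_of_injOn (fun x => x.2) ?_ ?_
  · rintro ⟨w, u⟩ hx
    simp only [Finset.coe_filter, mem_twoWalks, Set.mem_ofPred_eq] at hx
    obtain ⟨⟨h1, h2⟩, h3⟩ := hx
    simp only [Finset.coe_filter, Finset.mem_univ, true_and, Set.mem_ofPred_eq, dist_eq_two_iff]
    exact ⟨h3.symm, not_adj_of_fFree_three hC3 h1 h2, w, h1, h2⟩
  · rintro ⟨w, u⟩ hx ⟨w', u'⟩ hx' (rfl : u = u')
    simp only [Finset.coe_filter, mem_twoWalks, Set.mem_ofPred_eq] at hx hx'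
    obtain rfl := eq_of_fFree_four hC3 hC4 hx.1.1 hx.1.2 hx'.1.1 hx'.1.2 hx.2.symm
    rfl

lemma deg2_sum {A B : Type*} [Fintype A] [Fintype B] (X : SimpleGraph (A ⊕ B)) (a : A ⊕ B) :
    deg2 X a = (Finset.univ.filter (fun u => X.dist a (.inl u) = 2)).card +
      (Finset.univ.filter (fun u => X.dist a (.inr u) = 2)).card := by
  simp only [deg2, Finset.card_filter, Fintype.sum_sum_type]

/-- The vertices at distance two from `v` in `Q(G)` are the neighbours of `v`; the edges at distance
two join a neighbour of `v` to a vertex at distance two from `v` in `G`. -/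
lemma qGraph_deg2_inl (hconn : G.Connected) (hcard : 2 ≤ Fintype.card V)
    (hC3 : fFree (SimpleGraph.cycleGraph 3) G) (hC4 : fFree (SimpleGraph.cycleGraph 4) G)
    (v : V) : deg2 (qGraph G) (.inl v) = deg1 G v + deg2 G v := by
  rw [deg2_sum]
  congr 1
  · rw [deg1]
    congr 1
    ext u
    simp only [Finset.mem_filter, Finset.mem_univ, true_and]
    by_cases h : v = u
    · subst h; simp
    · rw [qGraph_dist_inl_inl hconn hcard h, ← SimpleGraph.dist_eq_one_iff_adj]
      omega
  · -- The vertex `u` corresponds to the edge joining it to its common neighbour with `v`.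
    have hmid : ∀ u, G.dist v u = 2 → ∃ w, G.Adj v w ∧ G.Adj w u :=
      fun u hu => (dist_eq_two_iff.1 hu).2.2
    choose! m hm1 hm2 using hmid
    symm
    refine Finset.card_bij
      (fun u hu => (⟨s(m u, u), hm2 u (Finset.mem_filter.1 hu).2⟩ : G.edgeSet)) ?_ ?_ ?_
    · intro u hu
      simp only [Finset.mem_filter, Finset.mem_univ, true_and] at hu ⊢
      rw [qGraph_dist_inl_inr_eq_two]
      refine ⟨?_, m u, by simp, hm1 u hu⟩
      simp only [Sym2.mem_iff, not_or]
      exact ⟨(hm1 u hu).ne, (dist_eq_two_iff.1 hu).1⟩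
    · intro u hu u' hu' h
      simp only [Finset.mem_filter, Finset.mem_univ, true_and] at hu hu'
      have h := Sym2.eq_iff.1 (congrArg Subtype.val h)
      rcases h with h | h
      · exact h.2
      · exact absurd (h.1 ▸ hm1 u hu) (dist_eq_two_iff.1 hu').2.1
    · rintro ⟨e, he⟩ h
      simp only [Finset.mem_filter, Finset.mem_univ, true_and] at h
      rw [qGraph_dist_inl_inr_eq_two] at h
      obtain ⟨hn, w, hw, hvw⟩ := h
      obtain ⟨u, rfl⟩ := Sym2.mem_iff_exists.1 hw
      have hwu : G.Adj w u := he
      have hvu : v ≠ u := by rintro rfl; simp at hn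
      have hd : G.dist v u = 2 :=
        dist_eq_two_iff.2 ⟨hvu, not_adj_of_fFree_three hC3 hvw hwu, w, hvw, hwu⟩
      refine ⟨u, by simpa using hd, ?_⟩
      have := eq_of_fFree_four hC3 hC4 (hm1 u hd) (hm2 u hd) hvw hwu hvu
      simp [this]

/-- The vertices at distance two from `e` in `Q(G)` are the far endpoints of the edges meeting `e`;
the absence of triangles makes these endpoints distinct for distinct edges. -/
lemma qGraph_deg2_inr (hconn : G.Connected) (hcard : 2 ≤ Fintype.card V)
    (hC3 : fFree (SimpleGraph.cycleGraph 3) G)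
    (e : G.edgeSet) :
    deg2 (qGraph G) (.inr e) = deg1 (lineG G) e + deg2 (lineG G) e := by
  rw [deg2_sum]
  congr 1
  · -- The vertex `v` corresponds to the edge joining it to its neighbour among the ends of `e`.
    have hmid : ∀ v, (qGraph G).dist (.inr e) (.inl v) = 2 →
        v ∉ (e : Sym2 V) ∧ ∃ w ∈ (e : Sym2 V), G.Adj v w := by
      intro v hv
      rwa [SimpleGraph.dist_comm, qGraph_dist_inl_inr_eq_two] at hv
    choose! hn m hm1 hm2 using hmid
    refine Finset.card_bij
      (fun v hv => (⟨s(v, m v), hm2 v (Finset.mem_filter.1 hv).2⟩ : G.edgeSet)) ?_ ?_ ?_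
    · intro v hv
      simp only [Finset.mem_filter, Finset.mem_univ, true_and] at hv ⊢
      refine lineG_adj.2 ⟨?_, m v, hm1 v hv, by simp⟩
      intro h
      apply hn v hv
      rw [h]
      simp
    · intro v hv v' hv' h
      simp only [Finset.mem_filter, Finset.mem_univ, true_and] at hv hv'
      have h := Sym2.eq_iff.1 (congrArg Subtype.val h)
      rcases h with h | h
      · exact h.1
      · exact absurd (h.1 ▸ hm1 v' hv') (hn v hv)
    · rintro ⟨f, hf⟩ h
      simp only [Finset.mem_filter, Finset.mem_univ, true_and] at h
      obtain ⟨hne, w, hwe, hwf⟩ := lineG_adj.1 h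
      obtain ⟨v, rfl⟩ := Sym2.mem_iff_exists.1 hwf
      have hwv : G.Adj w v := hf
      have hve : v ∉ (e : Sym2 V) := fun hve =>
        hne (Subtype.ext ((Sym2.mem_and_mem_iff hwv.ne).1 ⟨hwe, hve⟩))
      have hd : (qGraph G).dist (.inr e) (.inl v) = 2 := by
        rw [SimpleGraph.dist_comm, qGraph_dist_inl_inr_eq_two]
        exact ⟨hve, w, hwe, hwv.symm⟩
      refine ⟨v, by simpa using hd, ?_⟩
      have hmw : m v = w := by
        by_contra hmw
        exact not_adj_of_fFree_three hC3 (hm2 v hd).symm hwv.symm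
          (adj_of_mem_edge (hm1 v hd) hwe hmw)
      simp only [hmw, Sym2.eq_swap]
  · simp only [qGraph_dist_inr_inr hconn hcard, deg2]

end Counting

theorem qGraph_leapECI_bounds {V : Type*} [Fintype V] (G : SimpleGraph V)
    (hconn : G.Connected) (hcard : 2 ≤ Fintype.card V)
    (hC3 : fFree (SimpleGraph.cycleGraph 3) G)
    (hC4 : fFree (SimpleGraph.cycleGraph 4) G) :
    eci G + leapECI G + zagrebM1 G + eci (lineG G) + leapECI (lineG G) ≤
      leapECI (qGraph G) ∧
    leapECI (qGraph G) ≤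
      eci G + leapECI G + zagrebM1 G + eci (lineG G) + leapECI (lineG G) +
        zagrebM1 (lineG G) := by
  -- The vertices of `G` contribute their exact share; only the terms of the edges are estimated.
  have hsplit : leapECI (qGraph G) = eci G + leapECI G + zagrebM1 G +
      ∑ e, (deg1 (lineG G) e + deg2 (lineG G) e) * ecc (qGraph G) (.inr e) := by
    rw [leapECI, Fintype.sum_sum_type]
    congr 1
    · rw [← sum_card_twoWalks, eci, leapECI, ← Finset.sum_add_distrib, ← Finset.sum_add_distrib]
      refine Finset.sum_congr rfl fun v _ => ?_
      rw [qGraph_deg2_inl hconn hcard hC3 hC4, qGraph_ecc_inl hconn hcard,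
        ← deg1_add_deg2_eq hC3 hC4]
      ring
    · exact Finset.sum_congr rfl fun e _ => by rw [qGraph_deg2_inr hconn hcard hC3]
  have hline : eci (lineG G) + leapECI (lineG G) =
      ∑ e, (deg1 (lineG G) e + deg2 (lineG G) e) * ecc (lineG G) e := by
    rw [eci, leapECI, ← Finset.sum_add_distrib]
    exact Finset.sum_congr rfl fun e _ => by ring
  have hlow : ∑ e, (deg1 (lineG G) e + deg2 (lineG G) e) * ecc (lineG G) e ≤
      ∑ e, (deg1 (lineG G) e + deg2 (lineG G) e) * ecc (qGraph G) (.inr e) :=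
    Finset.sum_le_sum fun e _ => Nat.mul_le_mul_left _ (le_qGraph_ecc_inr hconn hcard e)
  have hupp : ∑ e, (deg1 (lineG G) e + deg2 (lineG G) e) * ecc (qGraph G) (.inr e) ≤
      ∑ e, (deg1 (lineG G) e + deg2 (lineG G) e) * ecc (lineG G) e + zagrebM1 (lineG G) := by
    rw [← sum_card_twoWalks, ← Finset.sum_add_distrib]
    refine Finset.sum_le_sum fun e _ => ?_
    calc _ ≤ (deg1 (lineG G) e + deg2 (lineG G) e) * (ecc (lineG G) e + 1) :=
          Nat.mul_le_mul_left _ (qGraph_ecc_inr_le hconn hcard e)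
      _ ≤ _ := by
          rw [Nat.mul_succ]
          exact Nat.add_le_add_left (deg1_add_deg2_le _ e) _
  omega
end
end
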